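/- Let α > 0. The kernel of the Riemann–Liouville fractional derivative D^α on X_α is exactly the span of {t^{α−⌈α⌉}, …, t^{α−2}, t^{α−1}}: for f ∈ X_α, D^α f = 0 almost everywhere on [0,b] if and only if f is a linear combination of t^{α−⌈α⌉}, …, t^{α−1}. In particular, ker D^α is a vector space of dimension ⌈α⌉. -/

import Mathlib

open MeasureTheory Set Filter Topology

open Classical in
/-- Riemann–Liouville fractional integral of order `α` with base point `0`;
`RL 0` is the identity operator. -/
noncomputable def RL (α : ℝ) (f : ℝ → ℝ) : ℝ → ℝ := fun t =>
  if α = 0 then f t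
  else (1 / Real.Gamma α) * ∫ s in (0:ℝ)..t, (t - s) ^ (α - 1) * f s

/-- `g ∈ AC[0,b]`: `g t = g 0 + ∫₀ᵗ φ` for some `φ ∈ L¹[0,b]`. -/
def MemAC (b : ℝ) (g : ℝ → ℝ) : Prop :=
  ∃ φ : ℝ → ℝ, IntegrableOn φ (Set.Icc 0 b) volume ∧
    ∀ t ∈ Set.Icc (0:ℝ) b, g t = g 0 + ∫ s in (0:ℝ)..t, φ s

/-- `g ∈ AC^n[0,b]`: `g ∈ C^{n-1}[0,b]` and `D^{n-1} g ∈ AC[0,b]`. -/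
def MemACn (b : ℝ) (n : ℕ) (g : ℝ → ℝ) : Prop :=
  ContDiffOn ℝ (n - 1 : ℕ) g (Set.Icc 0 b) ∧
    MemAC b (iteratedDerivWithin (n - 1) g (Set.Icc 0 b))

/-- `f ∈ X_α`, the space of functions with summable fractional derivative of order `α`:
`f ∈ L¹[0,b]` and (for `α ≠ 0`) `I^{⌈α⌉-α} f ∈ AC^{⌈α⌉}[0,b]`
(as an element of `L¹`, i.e. it has an `AC^{⌈α⌉}` representative); `X_0 = L¹[0,b]`. -/
def MemX (b : ℝ) (α : ℝ) (f : ℝ → ℝ) : Prop :=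
  IntegrableOn f (Set.Icc 0 b) volume ∧
    (α ≠ 0 → ∃ g : ℝ → ℝ,
      g =ᵐ[volume.restrict (Set.Icc 0 b)] RL ((⌈α⌉₊ : ℝ) - α) f ∧ MemACn b ⌈α⌉₊ g)

/-- `φ` is the Riemann–Liouville fractional derivative of order `α` of `f`,
i.e. `D^α f = D^{⌈α⌉}(I^{⌈α⌉-α} f) = φ`, the last derivative taken in the weak sense:
`D^{⌈α⌉-1}` of (the `AC^{⌈α⌉}` representative of) `I^{⌈α⌉-α} f` is an antiderivative of `φ`.
`D^0 = Id`. -/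
def IsRLDeriv (b : ℝ) (α : ℝ) (f φ : ℝ → ℝ) : Prop :=
  IntegrableOn φ (Set.Icc 0 b) volume ∧
    ((α = 0 ∧ φ =ᵐ[volume.restrict (Set.Icc 0 b)] f) ∨
     (α ≠ 0 ∧ ∃ g : ℝ → ℝ,
        g =ᵐ[volume.restrict (Set.Icc 0 b)] RL ((⌈α⌉₊ : ℝ) - α) f ∧
        MemACn b ⌈α⌉₊ g ∧
        ∀ t ∈ Set.Icc (0:ℝ) b,
          iteratedDerivWithin (⌈α⌉₊ - 1) g (Set.Icc 0 b) t =
            iteratedDerivWithin (⌈α⌉₊ - 1) g (Set.Icc 0 b) 0 + ∫ s in (0:ℝ)..t, φ s))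

theorem beta_aux {p q t : ℝ} (hp : 0 < p) (hq : 0 < q) (ht : 0 < t) :
    ∫ x in (0:ℝ)..t, x ^ (p - 1) * (t - x) ^ (q - 1) =
      t ^ (p + q - 1) * (Real.Gamma p * Real.Gamma q / Real.Gamma (p + q)) := by
  have h := Complex.betaIntegral_scaled (p : ℂ) (q : ℂ) ht
  rw [Complex.betaIntegral_eq_Gamma_mul_div _ _ (by simpa using hp) (by simpa using hq)] at h
  have e : ∫ x in (0:ℝ)..t, (x : ℂ) ^ ((p : ℂ) - 1) * ((t : ℂ) - x) ^ ((q : ℂ) - 1) =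
      ∫ x in (0:ℝ)..t, ((x ^ (p - 1) * (t - x) ^ (q - 1) : ℝ) : ℂ) := by
    apply intervalIntegral.integral_congr
    intro x hx
    rw [uIcc_of_le ht.le] at hx
    simp only
    rw [Complex.ofReal_mul, Complex.ofReal_cpow hx.1, Complex.ofReal_cpow (by linarith [hx.2])]
    push_cast
    rfl
  rw [e, intervalIntegral.integral_ofReal, ← Complex.ofReal_add, Complex.Gamma_ofReal,
    Complex.Gamma_ofReal, Complex.Gamma_ofReal] at h
  have e2 : (t : ℂ) ^ (((p + q : ℝ) : ℂ) - 1) = ((t ^ (p + q - 1) : ℝ) : ℂ) := by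
    rw [Complex.ofReal_cpow ht.le]; push_cast; rfl
  rw [e2] at h
  exact_mod_cast h

theorem beta_int {p q t : ℝ} (hp : 0 < p) (hq : 0 < q) (ht : 0 < t) :
    IntervalIntegrable (fun x : ℝ => x ^ (p - 1) * (t - x) ^ (q - 1)) volume 0 t := by
  by_contra hc
  have h := beta_aux hp hq ht
  rw [intervalIntegral.integral_undef hc] at h
  have : 0 < t ^ (p + q - 1) * (Real.Gamma p * Real.Gamma q / Real.Gamma (p + q)) := by
    have := Real.Gamma_pos_of_pos hp
    have := Real.Gamma_pos_of_pos hq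
    have := Real.Gamma_pos_of_pos (add_pos hp hq)
    positivity
  linarith

theorem poly_of_const {b : ℝ} (hb : 0 < b) (m : ℕ) : ∀ (g : ℝ → ℝ),
    ContDiffOn ℝ m g (Icc 0 b) →
    (∀ t ∈ Icc (0:ℝ) b, iteratedDerivWithin m g (Icc 0 b) t =
      iteratedDerivWithin m g (Icc 0 b) 0) →
    ∃ c : ℕ → ℝ, ∀ t ∈ Icc (0:ℝ) b, g t = ∑ i ∈ Finset.range (m + 1), c i * t ^ i := by
  have hu : UniqueDiffOn ℝ (Icc (0:ℝ) b) := uniqueDiffOn_Icc hb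
  induction m with
  | zero =>
    intro g _ h
    refine ⟨fun _ => g 0, fun t ht => ?_⟩
    simpa using h t ht
  | succ m ih =>
    intro g hg h
    have hg' : DifferentiableOn ℝ g (Icc 0 b) := hg.differentiableOn (by simp)
    obtain ⟨c, hc⟩ := ih (derivWithin g (Icc 0 b))
      (hg.derivWithin hu (by norm_cast)) (fun t ht => by
        have := h t ht
        rw [iteratedDerivWithin_succ'] at this
        exact this)
    have hP : ∀ t, HasDerivAt (fun t : ℝ => ∑ i ∈ Finset.range (m + 1), c i / (i + 1) * t ^ (i + 1))
        (∑ i ∈ Finset.range (m + 1), c i * t ^ i) t := by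
      intro t
      apply HasDerivAt.fun_sum
      intro i _
      have := (hasDerivAt_pow (i + 1) t).const_mul (c i / (i + 1))
      have e : c i / (i + 1) * (((i + 1 : ℕ) : ℝ) * t ^ (i + 1 - 1)) = c i * t ^ i := by
        have : (i : ℝ) + 1 ≠ 0 := by positivity
        rw [add_tsub_cancel_right]
        push_cast
        field_simp
      rw [e] at this
      exact this
    have key := constant_of_derivWithin_zero (a := 0) (b := b)
      (f := fun t => g t - ∑ i ∈ Finset.range (m + 1), c i / (i + 1) * t ^ (i + 1))
      (fun t ht => (hg' t ht).sub (hP t).differentiableAt.differentiableWithinAt)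
      (fun t ht => by
        have ht' : t ∈ Icc (0:ℝ) b := ⟨ht.1, ht.2.le⟩
        have := ((hg' t ht').hasDerivWithinAt.sub (hP t).hasDerivWithinAt).derivWithin (hu t ht')
        rw [hc t ht', sub_self] at this
        exact this)
    refine ⟨fun i => if i = 0 then g 0 else c (i - 1) / i, fun t ht => ?_⟩
    have := key t ht
    rw [Finset.sum_range_succ']
    simp only [ne_eq, Nat.add_eq_zero_iff, one_ne_zero, and_false, not_false_eq_true, zero_pow, mul_zero, Finset.sum_const_zero, sub_zero] at this
    simp
    linarith

/-- polynomial -/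
noncomputable def PP (n : ℕ) (c : ℕ → ℝ) : Polynomial ℝ :=
  ∑ k ∈ Finset.Icc 1 n, Polynomial.C (c k) * Polynomial.X ^ (n - k)

theorem PP_eval (n : ℕ) (c : ℕ → ℝ) (t : ℝ) :
    (PP n c).eval t = ∑ k ∈ Finset.Icc 1 n, c k * t ^ (n - k) := by
  simp [PP, Polynomial.eval_finsetSum]

theorem PP_coeff (n : ℕ) (c : ℕ → ℝ) (k : ℕ) (hk : k ∈ Finset.Icc 1 n) :
    (PP n c).coeff (n - k) = c k := by
  simp only [PP, Polynomial.finsetSum_coeff, Polynomial.coeff_C_mul_X_pow]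
  rw [Finset.sum_eq_single k]
  · simp
  · intro j hj hjk
    rw [if_neg]
    simp only [Finset.mem_Icc] at hj hk
    omega
  · intro h; exact absurd hk h

theorem PP_deg (n : ℕ) (hn : 0 < n) (c : ℕ → ℝ) : (PP n c).natDegree ≤ n - 1 := by
  apply Polynomial.natDegree_sum_le_of_forall_le
  intro k hk
  refine (Polynomial.natDegree_C_mul_X_pow_le _ _).trans ?_
  simp only [Finset.mem_Icc] at hk
  omega

theorem PP_contDiff (n m : ℕ) (c : ℕ → ℝ) : ContDiff ℝ m (fun t => (PP n c).eval t) := by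
  simp only [PP_eval]
  fun_prop

theorem iterDeriv_poly (P : Polynomial ℝ) (m : ℕ) :
    iteratedDeriv m (fun t => P.eval t) = fun t => (Polynomial.derivative^[m] P).eval t := by
  induction m with
  | zero => simp
  | succ m ih =>
    rw [iteratedDeriv_succ, ih, Function.iterate_succ_apply']
    ext t
    exact Polynomial.deriv _

theorem iterDeriv_const (n : ℕ) (hn : 0 < n) (c : ℕ → ℝ) {b : ℝ} (hb : 0 < b) :
    ∀ t ∈ Icc (0:ℝ) b, iteratedDerivWithin (n - 1) (fun t => (PP n c).eval t) (Icc 0 b) t =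
      iteratedDerivWithin (n - 1) (fun t => (PP n c).eval t) (Icc 0 b) 0 := by
  have hu : UniqueDiffOn ℝ (Icc (0:ℝ) b) := uniqueDiffOn_Icc hb
  have hcd : ContDiff ℝ (n - 1 : ℕ) (fun t => (PP n c).eval t) := PP_contDiff _ _ _
  obtain ⟨a, ha⟩ : ∃ a, Polynomial.derivative^[n - 1] (PP n c) = Polynomial.C a := by
    apply (Polynomial.natDegree_eq_zero.1 _).imp (fun _ h => h.symm)
    have := Polynomial.natDegree_iterate_derivative (PP n c) (n - 1)
    have := PP_deg n hn c
    omega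
  intro t ht
  rw [iteratedDerivWithin_eq_iteratedDeriv hu hcd.contDiffAt ht,
    iteratedDerivWithin_eq_iteratedDeriv hu hcd.contDiffAt ⟨le_rfl, hb.le⟩, iterDeriv_poly, ha]
  simp

theorem rpow_PP (n : ℕ) (α : ℝ) (c : ℕ → ℝ) {t : ℝ} (ht : 0 < t) :
    t ^ ((n:ℝ) - α) * ∑ k ∈ Finset.Icc 1 n, c k * t ^ (α - (k:ℝ)) = (PP n c).eval t := by
  rw [PP_eval, Finset.mul_sum]
  refine Finset.sum_congr rfl fun k hk => ?_
  rw [mul_left_comm, ← Real.rpow_add ht, ← Real.rpow_natCast,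
    Nat.cast_sub (Finset.mem_Icc.1 hk).2]
  congr 2
  ring

theorem ae_pos_of_Icc {b : ℝ} : ∀ᵐ t ∂(volume.restrict (Icc 0 b)), t ∈ Ioo 0 b := by
  rw [← restrict_Ioo_eq_restrict_Icc]
  exact ae_restrict_mem measurableSet_Ioo

theorem lin_indep (b : ℝ) (hb : 0 < b) (α : ℝ) (n : ℕ) (c : ℕ → ℝ)
    (h : (fun t : ℝ => ∑ k ∈ Finset.Icc 1 n, c k * t ^ (α - (k:ℝ)))
          =ᵐ[volume.restrict (Set.Icc 0 b)] (fun _ => (0:ℝ))) :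
      ∀ k ∈ Finset.Icc 1 n, c k = 0 := by
  have hP : PP n c = 0 := by
    apply Polynomial.eq_zero_of_infinite_isRoot
    intro hfin
    have h0 := hfin.measure_zero volume
    have h1 : ∀ᵐ t ∂(volume.restrict (Icc 0 b)), t ∈ {x | (PP n c).IsRoot x} := by
      filter_upwards [h, ae_pos_of_Icc] with t ht ht2
      have := rpow_PP n α c ht2.1
      rw [ht, mul_zero] at this
      exact this.symm
    have h2 : ∀ᵐ t ∂(volume.restrict (Icc 0 b)), t ∉ {x | (PP n c).IsRoot x} :=
      ae_restrict_of_ae (measure_eq_zero_iff_ae_notMem.1 h0)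
    have h3 : ∀ᵐ t ∂(volume.restrict (Icc 0 b)), False := by
      filter_upwards [h1, h2] with t a b using b a
    rw [Filter.eventually_false_iff_eq_bot, ae_eq_bot, Measure.restrict_eq_zero] at h3
    simp at h3
    linarith
  intro k hk
  rw [← PP_coeff n c k hk, hP]
  simp

theorem RL_congr {b β : ℝ} {f h : ℝ → ℝ} (hβ : β ≠ 0)
    (hfh : f =ᵐ[volume.restrict (Icc 0 b)] h) {t : ℝ} (ht : t ∈ Icc 0 b) :
    RL β f t = RL β h t := by
  simp only [RL, if_neg hβ]
  congr 1
  apply intervalIntegral.integral_congr_ae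
  rw [uIoc_of_le ht.1]
  have := (ae_restrict_iff' measurableSet_Icc).1 hfh
  filter_upwards [this] with x hx hx2
  rw [hx ⟨hx2.1.le, hx2.2.trans ht.2⟩]

theorem RL_pow (n : ℕ) (α : ℝ) (h1 : α < n) (h2 : (n:ℝ) < α + 1) (c : ℕ → ℝ) {t : ℝ} (ht : 0 < t) :
    RL ((n:ℝ) - α) (fun t => ∑ k ∈ Finset.Icc 1 n, c k * t ^ (α - (k:ℝ))) t =
      (PP n (fun k => c k * (Real.Gamma (α - k + 1) / Real.Gamma (n - k + 1)))).eval t := by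
  have hβ : 0 < (n:ℝ) - α := by linarith
  have hk1 : ∀ k ∈ Finset.Icc 1 n, 0 < α - (k:ℝ) + 1 := by
    intro k hk
    have : (k:ℝ) ≤ n := by exact_mod_cast (Finset.mem_Icc.1 hk).2
    linarith
  simp only [RL, if_neg hβ.ne']
  rw [PP_eval]
  simp only [Finset.mul_sum]
  rw [intervalIntegral.integral_finsetSum, Finset.mul_sum]
  · refine Finset.sum_congr rfl fun k hk => ?_
    have e : ∀ s : ℝ, (t - s) ^ ((n:ℝ) - α - 1) * (c k * s ^ (α - (k:ℝ))) =
        c k * (s ^ (α - k + 1 - 1) * (t - s) ^ ((n:ℝ) - α - 1)) := by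
      intro s
      rw [add_sub_cancel_right]; ring
    simp only [e]
    rw [intervalIntegral.integral_const_mul, beta_aux (hk1 k hk) hβ ht]
    have e2 : α - k + 1 + ((n:ℝ) - α) = n - k + 1 := by ring
    have e3 : t ^ (n - k) = t ^ ((n:ℝ) - k + 1 - 1) := by
      rw [← Real.rpow_natCast, Nat.cast_sub (Finset.mem_Icc.1 hk).2, add_sub_cancel_right]
    rw [e2, e3]
    have := (Real.Gamma_pos_of_pos hβ).ne'
    field_simp
  · intro k hk
    have := (beta_int (hk1 k hk) hβ ht).const_mul (c k)
    convert this using 2 with s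
    rw [add_sub_cancel_right]; ring

theorem pow_integrable (b : ℝ) (hb : 0 < b) (n : ℕ) (α : ℝ) (h2 : (n:ℝ) < α + 1) (c : ℕ → ℝ) :
    IntegrableOn (fun t : ℝ => ∑ k ∈ Finset.Icc 1 n, c k * t ^ (α - (k:ℝ))) (Icc 0 b) := by
  apply integrable_finsetSum
  intro k hk
  have : (k:ℝ) ≤ n := by exact_mod_cast (Finset.mem_Icc.1 hk).2
  have := (intervalIntegral.intervalIntegrable_rpow' (a := 0) (b := b) (r := α - k) (by linarith)).const_mul (c k)
  rwa [intervalIntegrable_iff_integrableOn_Icc_of_le hb.le] at this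

open scoped Convolution in
/-- real convolution -/
noncomputable def cv (F G : ℝ → ℝ) : ℝ → ℝ := convolution F G (ContinuousLinearMap.mul ℝ ℝ) volume

theorem cv_eq {F G : ℝ → ℝ} (hF : ∀ x ≤ 0, F x = 0) (hG : ∀ x ≤ 0, G x = 0) {t : ℝ} (ht : 0 ≤ t) :
    cv F G t = ∫ s in (0:ℝ)..t, F s * G (t - s) := by
  rw [intervalIntegral.integral_of_le ht]
  simp only [cv, convolution, ContinuousLinearMap.mul_apply']
  symm
  apply setIntegral_eq_integral_of_forall_compl_eq_zero
  intro x hx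
  rcases le_or_gt x 0 with h | h
  · rw [hF x h, zero_mul]
  · have : t < x := by by_contra h'; exact hx ⟨h, not_lt.1 h'⟩
    rw [hG _ (by linarith), mul_zero]

theorem cv_neg {F G : ℝ → ℝ} (hF : ∀ x ≤ 0, F x = 0) (hG : ∀ x ≤ 0, G x = 0) {t : ℝ} (ht : t ≤ 0) :
    cv F G t = 0 := by
  simp only [cv, convolution, ContinuousLinearMap.mul_apply']
  rw [← integral_zero ℝ ℝ (μ := volume)]
  congr 1
  ext x
  rcases le_or_gt x 0 with h | h
  · rw [hF x h, zero_mul]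
  · rw [hG _ (by linarith), mul_zero]

theorem cv_assoc {F G K : ℝ → ℝ} (hF : Integrable F) (hG : Integrable G) (hK : Integrable K) :
    ∀ᵐ t, cv (cv F G) K t = cv F (cv G K) t := by
  have h3 := hF.norm.ae_convolution_exists (ContinuousLinearMap.mul ℝ ℝ)
    (hG.norm.integrable_convolution (ContinuousLinearMap.mul ℝ ℝ) hK.norm)
  filter_upwards [h3] with t ht
  exact convolution_assoc _ _ _ _ (fun x y z => by simp [mul_assoc]) hF.aestronglyMeasurable
    hG.aestronglyMeasurable hK.aestronglyMeasurable
    (hF.ae_convolution_exists _ hG) (hG.norm.ae_convolution_exists _ hK.norm) ht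

/-- truncated kernel -/
noncomputable def kk (b γ : ℝ) : ℝ → ℝ := indicator (Ioo 0 b) (fun x => x ^ (γ - 1))

theorem ind_neg (b : ℝ) (f : ℝ → ℝ) : ∀ x ≤ 0, indicator (Ioo 0 b) f x = 0 := by
  intro x hx
  exact indicator_of_notMem (fun h => absurd h.1 (not_lt.2 hx)) _

theorem kk_neg (b γ : ℝ) : ∀ x ≤ 0, kk b γ x = 0 := ind_neg b _

theorem ckk_neg (b γ δ : ℝ) : ∀ x ≤ 0, cv (kk b γ) (kk b δ) x = 0 :=
  fun _ hx => cv_neg (kk_neg b _) (kk_neg b _) hx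

theorem cik_neg (b γ : ℝ) (f : ℝ → ℝ) : ∀ x ≤ 0, cv (indicator (Ioo 0 b) f) (kk b γ) x = 0 :=
  fun _ hx => cv_neg (ind_neg b _) (kk_neg b _) hx

theorem kk_int {b γ : ℝ} (hb : 0 < b) (hγ : 0 < γ) : Integrable (kk b γ) := by
  rw [kk, integrable_indicator_iff measurableSet_Ioo]
  have := (intervalIntegral.intervalIntegrable_rpow' (a := 0) (b := b) (r := γ - 1) (by linarith))
  rwa [intervalIntegrable_iff_integrableOn_Ioo_of_le hb.le] at this

theorem cv_ker {b β : ℝ} (h0 : 0 < β) (h1 : β < 1) {t : ℝ} (ht : t ∈ Ioo 0 b) :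
    cv (kk b β) (kk b (1 - β)) t = Real.Gamma β * Real.Gamma (1 - β) := by
  rw [cv_eq (kk_neg b _) (kk_neg b _) ht.1.le]
  have := beta_aux h0 (show 0 < 1 - β by linarith) ht.1
  rw [add_sub_cancel, sub_self, Real.rpow_zero, Real.Gamma_one, one_mul, div_one] at this
  rw [← this]
  apply intervalIntegral.integral_congr_Ioo_of_le ht.1.le
  intro x hx
  simp only [kk]
  rw [indicator_of_mem (show x ∈ Ioo 0 b from ⟨hx.1, hx.2.trans ht.2⟩),
    indicator_of_mem (show t - x ∈ Ioo 0 b from ⟨by linarith [hx.2], by linarith [hx.1, ht.2]⟩)]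

theorem cv_RL {b β : ℝ} (h0 : 0 < β) (f : ℝ → ℝ) {t : ℝ} (ht : t ∈ Ioo 0 b) :
    cv (indicator (Ioo 0 b) f) (kk b β) t = Real.Gamma β * RL β f t := by
  rw [cv_eq (ind_neg b _) (kk_neg b _) ht.1.le]
  simp only [RL, if_neg h0.ne']
  rw [← mul_assoc, mul_one_div_cancel (Real.Gamma_pos_of_pos h0).ne', one_mul]
  apply intervalIntegral.integral_congr_Ioo_of_le ht.1.le
  intro x hx
  simp only [kk]
  rw [indicator_of_mem (show x ∈ Ioo 0 b from ⟨hx.1, hx.2.trans ht.2⟩),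
    indicator_of_mem (show t - x ∈ Ioo 0 b from ⟨by linarith [hx.2], by linarith [hx.1, ht.2]⟩), mul_comm]

theorem abel {b β : ℝ} (hb : 0 < b) (h0 : 0 < β) (h1 : β < 1) (f : ℝ → ℝ)
    (hf : IntegrableOn f (Icc 0 b)) :
    ∀ᵐ t, t ∈ Ioo 0 b → cv (cv (indicator (Ioo 0 b) f) (kk b β)) (kk b (1 - β)) t =
      (∫ s in (0:ℝ)..t, f s) * (Real.Gamma β * Real.Gamma (1 - β)) := by
  have hu : Integrable (indicator (Ioo 0 b) f) := by
    rw [integrable_indicator_iff measurableSet_Ioo]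
    exact hf.mono_set Ioo_subset_Icc_self
  filter_upwards [cv_assoc hu (kk_int hb h0) (kk_int hb (show 0 < 1 - β by linarith))] with t h ht
  rw [h, cv_eq (ind_neg b _) (ckk_neg b _ _) ht.1.le,
    ← intervalIntegral.integral_mul_const]
  apply intervalIntegral.integral_congr_Ioo_of_le ht.1.le
  intro x hx
  simp only
  rw [indicator_of_mem (show x ∈ Ioo 0 b from ⟨hx.1, hx.2.trans ht.2⟩),
    cv_ker h0 h1 ⟨by linarith [hx.2], by linarith [hx.1, ht.2]⟩]

theorem RL_inj {b β : ℝ} (hb : 0 < b) (h0 : 0 < β) (h1 : β < 1) (f h : ℝ → ℝ)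
    (hf : IntegrableOn f (Icc 0 b)) (hh : IntegrableOn h (Icc 0 b))
    (e : RL β f =ᵐ[volume.restrict (Icc 0 b)] RL β h) :
    f =ᵐ[volume.restrict (Icc 0 b)] h := by
  have hC : Real.Gamma β * Real.Gamma (1 - β) ≠ 0 :=
    mul_ne_zero (Real.Gamma_pos_of_pos h0).ne' (Real.Gamma_pos_of_pos (by linarith)).ne'
  have e' := (ae_restrict_iff' measurableSet_Icc).1 e
  have key : ∀ᵐ t, t ∈ Ioo 0 b → ∫ s in (0:ℝ)..t, f s = ∫ s in (0:ℝ)..t, h s := by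
    filter_upwards [abel hb h0 h1 f hf, abel hb h0 h1 h hh] with t a1 a2 ht
    apply mul_right_cancel₀ hC
    rw [← a1 ht, ← a2 ht,
      cv_eq (cik_neg b _ _) (kk_neg b _) ht.1.le,
      cv_eq (cik_neg b _ _) (kk_neg b _) ht.1.le]
    apply intervalIntegral.integral_congr_ae
    filter_upwards [e'] with x hx hx2
    rw [uIoc_of_le ht.1.le] at hx2
    have hxb : x ∈ Ioo 0 b := ⟨hx2.1, hx2.2.trans_lt ht.2⟩
    rw [cv_RL h0 f hxb, cv_RL h0 h hxb, hx ⟨hxb.1.le, hxb.2.le⟩]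
  have cont : ∀ g : ℝ → ℝ, IntegrableOn g (Icc 0 b) →
      ContinuousOn (fun t => ∫ s in (0:ℝ)..t, g s) (Ioo 0 b) := by
    intro g hg
    have := intervalIntegral.continuousOn_primitive_interval (f := g) (μ := volume) (a := 0) (b := b)
      (by rwa [uIcc_of_le hb.le])
    rw [uIcc_of_le hb.le] at this
    exact this.mono Ioo_subset_Icc_self
  have all : EqOn (fun t => ∫ s in (0:ℝ)..t, f s) (fun t => ∫ s in (0:ℝ)..t, h s) (Ioo 0 b) :=
    Measure.eqOn_open_of_ae_eq ((ae_restrict_iff' measurableSet_Ioo).2 key) isOpen_Ioo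
      (cont f hf) (cont h hh)
  have ii : ∀ g : ℝ → ℝ, IntegrableOn g (Icc 0 b) → IntervalIntegrable g volume 0 b := fun g hg =>
    (intervalIntegrable_iff_integrableOn_Icc_of_le hb.le).2 hg
  filter_upwards [ae_restrict_of_ae (ii f hf).ae_hasDerivAt_integral,
    ae_restrict_of_ae (ii h hh).ae_hasDerivAt_integral, ae_pos_of_Icc] with x d1 d2 hx
  rw [uIcc_of_le hb.le] at d1 d2
  have hx' : x ∈ Icc 0 b := ⟨hx.1.le, hx.2.le⟩
  have h00 : (0:ℝ) ∈ Icc 0 b := ⟨le_rfl, hb.le⟩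
  have d2' := (d2 hx' 0 h00).congr_of_eventuallyEq
    (all.eventuallyEq_of_mem (isOpen_Ioo.mem_nhds hx))
  exact (d1 hx' 0 h00).unique d2'

theorem PP_of_const {b : ℝ} (hb : 0 < b) (n : ℕ) (hn : 0 < n) (g : ℝ → ℝ)
    (hg : ContDiffOn ℝ (n - 1 : ℕ) g (Icc 0 b))
    (h : ∀ t ∈ Icc (0:ℝ) b, iteratedDerivWithin (n - 1) g (Icc 0 b) t =
      iteratedDerivWithin (n - 1) g (Icc 0 b) 0) :
    ∃ c : ℕ → ℝ, ∀ t ∈ Icc (0:ℝ) b, g t = (PP n c).eval t := by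
  obtain ⟨c, hc⟩ := poly_of_const hb (n - 1) g hg h
  refine ⟨fun k => c (n - k), fun t ht => ?_⟩
  rw [hc t ht, PP_eval]
  refine Finset.sum_bij' (fun i _ => n - i) (fun k _ => n - k) ?_ ?_ ?_ ?_ ?_
  · intro i hi; simp only [Finset.mem_range, Finset.mem_Icc] at *; omega
  · intro i hi; simp only [Finset.mem_range, Finset.mem_Icc] at *; omega
  · intro i hi; simp only [Finset.mem_range] at *; omega
  · intro i hi; simp only [Finset.mem_Icc] at *; omega
  · intro i hi
    simp only [Finset.mem_range] at hi
    rw [show n - (n - i) = i by omega]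

/-- The kernel of `D^α` on `X_α` is exactly the span of `t^{α-⌈α⌉}, …, t^{α-1}`:
for `f ∈ X_α`, `D^α f = 0` a.e. iff `f` is (a.e.) a linear combination
`∑_{k=1}^{⌈α⌉} c_k t^{α-k}`; moreover these powers are linearly independent in `L¹[0,b]`,
so `ker D^α` has dimension `⌈α⌉`. -/
theorem ker_RLderiv (b : ℝ) (hb : 0 < b) (α : ℝ) (hα : 0 < α) :
    (∀ f : ℝ → ℝ, MemX b α f →
      (IsRLDeriv b α f (fun _ => (0:ℝ)) ↔
        ∃ c : ℕ → ℝ, f =ᵐ[volume.restrict (Set.Icc 0 b)]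
          fun t => ∑ k ∈ Finset.Icc 1 ⌈α⌉₊, c k * t ^ (α - (k:ℝ)))) ∧
    ∀ c : ℕ → ℝ,
      (fun t : ℝ => ∑ k ∈ Finset.Icc 1 ⌈α⌉₊, c k * t ^ (α - (k:ℝ)))
          =ᵐ[volume.restrict (Set.Icc 0 b)] (fun _ => (0:ℝ)) →
      ∀ k ∈ Finset.Icc 1 ⌈α⌉₊, c k = 0 := by
  refine ⟨fun f hf => ?_, fun c hc => lin_indep b hb α _ c hc⟩
  have hn : 0 < ⌈α⌉₊ := Nat.ceil_pos.2 hα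
  have hle : α ≤ ⌈α⌉₊ := Nat.le_ceil α
  have hlt : (⌈α⌉₊ : ℝ) < α + 1 := Nat.ceil_lt_add_one hα.le
  generalize hnn : ⌈α⌉₊ = n at *
  constructor
  · rintro ⟨-, ⟨h, -⟩ | ⟨-, g, hg, hgA, hg0⟩⟩
    · exact absurd h hα.ne'
    rw [hnn] at hg hgA hg0
    obtain ⟨c, hc⟩ := PP_of_const hb n hn g hgA.1 (fun t ht => by simpa using hg0 t ht)
    rcases hle.eq_or_lt with heq | hlt'
    · refine ⟨c, ?_⟩
      filter_upwards [hg, ae_pos_of_Icc] with t h1 h2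
      have := rpow_PP n α c h2.1
      rw [← hc t ⟨h2.1.le, h2.2.le⟩, h1, ← heq, sub_self, Real.rpow_zero, one_mul] at this
      rw [this]
      simp [RL]
    · refine ⟨fun k => c k * (Real.Gamma (n - k + 1) / Real.Gamma (α - k + 1)), ?_⟩
      apply RL_inj hb (β := n - α) (by linarith) (by linarith) _ _ hf.1
        (pow_integrable b hb n α hlt _)
      filter_upwards [hg, ae_pos_of_Icc] with t h1 h2
      rw [← h1, RL_pow n α hlt' hlt _ h2.1, hc t ⟨h2.1.le, h2.2.le⟩, PP_eval, PP_eval]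
      refine Finset.sum_congr rfl fun k hk => ?_
      have hk' : (k:ℝ) ≤ n := by exact_mod_cast (Finset.mem_Icc.1 hk).2
      have g1 := (Real.Gamma_pos_of_pos (show 0 < (n:ℝ) - k + 1 by linarith)).ne'
      have g2 := (Real.Gamma_pos_of_pos (show 0 < α - k + 1 by linarith)).ne'
      field_simp
  · rintro ⟨c, hc⟩
    obtain ⟨d, hd⟩ : ∃ d : ℕ → ℝ, ∀ t ∈ Ioo 0 b,
        (RL ((n:ℝ) - α) (fun t => ∑ k ∈ Finset.Icc 1 n, c k * t ^ (α - (k:ℝ)))) t =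
          (PP n d).eval t := by
      rcases hle.eq_or_lt with heq | hlt'
      · refine ⟨c, fun t ht => ?_⟩
        rw [← rpow_PP n α c ht.1, ← heq]
        simp [RL]
      · exact ⟨_, fun t ht => RL_pow n α hlt' hlt c ht.1⟩
    refine ⟨integrableOn_zero, Or.inr ⟨hα.ne', fun t => (PP n d).eval t, ?_⟩⟩
    rw [hnn]
    refine ⟨?_, ⟨(PP_contDiff _ _ _).contDiffOn, fun _ => 0, integrableOn_zero, ?_⟩, ?_⟩
    · filter_upwards [hc, ae_pos_of_Icc] with t h1 h2
      rw [← hd t h2]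
      rcases hle.eq_or_lt with heq | hlt'
      · simp only [RL, if_pos (sub_eq_zero.2 heq.symm)]
        exact h1.symm
      · exact (RL_congr (by linarith) hc ⟨h2.1.le, h2.2.le⟩).symm
    · simpa using iterDeriv_const n hn d hb
    · simpa using iterDeriv_const n hn d hb
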